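/- For every μ ∈ M_f^∞ and every ε > 0, the finite measure μ_ε defined by μ_ε(E) = μ(E ∩ W_ε) for Borel E ⊆ W satisfies OT_∞(μ, μ_ε) ≤ ε. Consequently, the set M_fin^∞ of finite measures in M^∞ is dense in (M_f^∞, OT_∞), and M_f^∞ is the Cauchy completion of (M_fin^∞, OT_∞). -/

import Mathlib

/-! Common setup: the birth-death plane, Radon measures, partial optimal transport. -/

noncomputable section

open MeasureTheory Topology Filter Set
open scoped ENNReal

/-- The ambient plane `ℝ²` (with the sup-norm, i.e. `q = ∞`). -/
abbrev P2 : Type := ℝ × ℝ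

/-- The birth-death plane `W = {(b,d) : b < d}`. -/
def Wbd : Set P2 := {p | p.1 < p.2}

/-- The closure `W̄` of the birth-death plane. -/
def Wcl : Set P2 := closure Wbd

/-- The diagonal `Δ`. -/
def Diag : Set P2 := {p | p.1 = p.2}

/-- Distance from a point to the diagonal, `‖x - Δ‖`. -/
def distDiag (x : P2) : ℝ := Metric.infDist x Diag

/-- The pseudometric `d(x,y) = min(‖x-y‖, ‖x-Δ‖ + ‖y-Δ‖)` on `W̄`. -/
def dW (x y : P2) : ℝ := min (dist x y) (distDiag x + distDiag y)

/-- The support of a Borel measure: points all of whose neighborhoods have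
positive measure. -/
def msupport {α : Type*} [TopologicalSpace α] [MeasurableSpace α] (μ : Measure α) : Set α :=
  {x | ∀ U ∈ 𝓝 x, 0 < μ U}

/-- `μ` is a Radon measure on the subspace `S`: it vanishes off `S`, is inner regular
(on relatively open sets) by compact sets, outer regular (by relatively open sets), and finite
on compact subsets of `S`. -/
def RadonOn {α : Type*} [TopologicalSpace α] [MeasurableSpace α] (S : Set α)
    (μ : Measure α) : Prop :=
  μ Sᶜ = 0 ∧
  (∀ U : Set α, IsOpen U → μ (U ∩ S) = ⨆ (K : Set α) (_ : K ⊆ U ∩ S) (_ : IsCompact K), μ K) ∧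
  (∀ E : Set α, E ⊆ S → MeasurableSet E →
    μ E = ⨅ (U : Set α) (_ : IsOpen U) (_ : E ⊆ U), μ (U ∩ S)) ∧
  (∀ K : Set α, K ⊆ S → IsCompact K → μ K < ⊤)

/-- The set `M` of Radon measures on `W`. -/
def MRadon : Set (Measure P2) := {μ | RadonOn Wbd μ}

/-- `pers_∞(μ) = sup{‖x-Δ‖ : x ∈ spt μ}` (valued in `ℝ≥0∞`). -/
def persInf (μ : Measure P2) : ℝ≥0∞ := ⨆ x ∈ msupport μ, ENNReal.ofReal (distDiag x)

/-- The space `M^∞` of Radon measures on `W` with finite `∞`-persistence. -/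
def MInf : Set (Measure P2) := {μ | RadonOn Wbd μ ∧ persInf μ < ⊤}

/-- A coupling (admissible transport plan) between `μ` and `ν`: a Radon measure on
`W̄ × W̄` whose marginals restricted to Borel subsets of `W` are `μ` and `ν`. -/
def IsCoupling (π : Measure (P2 × P2)) (μ ν : Measure P2) : Prop :=
  RadonOn (Wcl ×ˢ Wcl) π ∧
  (∀ A : Set P2, A ⊆ Wbd → MeasurableSet A → π (A ×ˢ Wcl) = μ A) ∧
  (∀ B : Set P2, B ⊆ Wbd → MeasurableSet B → π (Wcl ×ˢ B) = ν B)

/-- The `∞`-cost of a transport plan: `sup {d(x,y) : (x,y) ∈ spt π}`. -/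
def costInf (π : Measure (P2 × P2)) : ℝ≥0∞ :=
  ⨆ p ∈ msupport π, ENNReal.ofReal (dW p.1 p.2)

/-- The partial `∞`-optimal transport distance. -/
def OT (μ ν : Measure P2) : ℝ≥0∞ :=
  ⨅ (π : Measure (P2 × P2)) (_ : IsCoupling π μ ν), costInf π

/-- `W_ε = {(x,y) : y - x > ε}`. -/
def Weps (ε : ℝ) : Set P2 := {p | p.2 - p.1 > ε}

/-- The space `M_f^∞` of off-diagonally finite measures. -/
def Mf : Set (Measure P2) := {μ | μ ∈ MInf ∧ ∀ ε : ℝ, 0 < ε → μ (Weps ε) < ⊤}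

/-- The space `M_fin^∞` of finite measures in `M^∞`. -/
def Mfin : Set (Measure P2) := {μ | μ ∈ MInf ∧ μ Wbd < ⊤}

/-- `f ∈ C_c(W)`: a continuous function, compactly supported, with support contained
in the open set `W` (extended by zero to the plane). -/
def IsCcW (f : P2 → ℝ) : Prop :=
  Continuous f ∧ HasCompactSupport f ∧ tsupport f ⊆ Wbd

/-- Convergence of a sequence of measures to `μ` in the distance `OT_∞`. -/
def OTConv (u : ℕ → Measure P2) (μ : Measure P2) : Prop :=
  Tendsto (fun n => OT (u n) μ) atTop (𝓝 0)

/-!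
A coupling of cost less than `δ` restricts to a partial matching along pairs at distance at most `δ`
that misses only mass of lifetime at most `2 * δ`. Conversely, such a partial matching extends to a
coupling of cost at most `δ` by sending the unmatched mass to the diagonal; since that mass may be
infinite, it is sent to diagonal points escaping to infinity, which keeps the plan Radon.

Truncating `μ` to `W_ε` is a partial matching along the identity, hence costs at most `ε`. For a
Cauchy sequence, the partial matchings bound the mass away from the diagonal uniformly, so the
sequence has a vague limit along an ultrafilter. Partial matchings also have vague limits: the pairs
related to a compact set of points far from the diagonal form a compact set, so no mass escapes.
The terms of the sequence are therefore matched with the vague limit, to which they converge.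
-/

section VagueConvergence

open scoped CompactlySupported

variable {ι X Y : Type*} [TopologicalSpace X] [MeasurableSpace X]
  [TopologicalSpace Y] [MeasurableSpace Y]

/-- Vague convergence of measures: convergence of the integrals of all compactly supported
continuous functions. -/
def VagueTendsto (s : ι → Measure X) (l : Filter ι) (m : Measure X) : Prop :=
  ∀ f : C_c(X, ℝ), Tendsto (fun i => ∫ x, f x ∂s i) l (𝓝 (∫ x, f x ∂m))

lemma exists_tendsto_integral_of_limsup_lt_top {l : Ultrafilter ι} {s : ι → Measure X}
    (f : C_c(X, ℝ)) (hs : limsup (fun i => s i (tsupport f)) l < ∞) :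
    ∃ a : ℝ, Tendsto (fun i => ∫ x, f x ∂s i) l (𝓝 a) := by
  obtain ⟨C, hsC, hC⟩ := exists_between hs
  obtain ⟨B, hB⟩ := f.continuous.bounded_above_of_compact_support f.hasCompactSupport
  have hbdd : ∀ᶠ i in l, ∫ x, f x ∂s i ∈ Metric.closedBall (0 : ℝ) (|B| * C.toReal) := by
    filter_upwards [eventually_lt_of_limsup_lt hsC] with i hi
    rw [mem_closedBall_zero_iff, ← setIntegral_eq_integral_of_forall_compl_eq_zero
      fun x hx => image_eq_zero_of_notMem_tsupport hx]
    calc ‖∫ x in tsupport f, f x ∂s i‖ ≤ |B| * (s i).real (tsupport f) :=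
          norm_setIntegral_le_of_norm_le_const (hi.trans hC)
            fun x _ => (hB x).trans (le_abs_self B)
      _ ≤ |B| * C.toReal := by gcongr; exact ENNReal.toReal_mono hC.ne hi.le
  obtain ⟨a, -, ha⟩ := (isCompact_closedBall (0 : ℝ) (|B| * C.toReal)).ultrafilter_le_nhds
    (l.map fun i => ∫ x, f x ∂s i) (le_principal_iff.2 hbdd)
  exact ⟨a, ha⟩

variable [BorelSpace X] [BorelSpace Y] {l : Filter ι} {s : ι → Measure X} {m : Measure X}
  {t : ι → Measure Y} {m' : Measure Y}

lemma VagueTendsto.map_homeomorph (h : VagueTendsto s l m) (e : X ≃ₜ Y) :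
    VagueTendsto (fun i => (s i).map e) l (m.map e) := by
  intro f
  simp only [e.measurableEmbedding.integral_map]
  exact h ⟨f.toContinuousMap.comp e, f.hasCompactSupport.comp_homeomorph e⟩

variable [T2Space X] [LocallyCompactSpace X] [T2Space Y] [LocallyCompactSpace Y]

lemma VagueTendsto.measure_le_liminf_of_isOpen [l.NeBot] [m.Regular] (h : VagueTendsto s l m)
    {U : Set X} (hU : IsOpen U) : m U ≤ liminf (fun i => s i U) l := by
  rw [hU.measure_eq_iSup_isCompact]
  refine iSup₂_le fun K hKU => iSup_le fun hK => ?_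
  obtain ⟨f, hfK, hfc, hfU, hf⟩ := exists_continuousMap_one_of_isCompact_subset_isOpen hK hU hKU
  calc m K ≤ ENNReal.ofReal (∫ x, f x ∂m) :=
        (f.continuous.integrable_of_hasCompactSupport hfc).measure_le_integral
          (.of_forall fun x => (hf x).1) fun x hx => (hfK hx).ge
    _ = liminf (fun i => ENNReal.ofReal (∫ x, f x ∂s i)) l :=
        (ENNReal.tendsto_ofReal (h ⟨f, hfc⟩)).liminf_eq.symm
    _ ≤ liminf (fun i => s i U) l :=
        liminf_le_liminf <| .of_forall fun i => integral_le_measure (fun x _ => (hf x).2)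
          fun x hx => (image_eq_zero_of_notMem_tsupport fun hx' => hx (hfU hx')).le

lemma VagueTendsto.ae_mem_of_isClosed [l.NeBot] [m.Regular] (h : VagueTendsto s l m) {C : Set X}
    (hC : IsClosed C) (hs : ∀ᶠ i in l, ∀ᵐ x ∂s i, x ∈ C) : ∀ᵐ x ∂m, x ∈ C := by
  refine le_antisymm ?_ zero_le
  calc m Cᶜ ≤ liminf (fun i => s i Cᶜ) l := h.measure_le_liminf_of_isOpen hC.isOpen_compl
    _ = liminf (fun _ => 0) l := liminf_congr hs
    _ = 0 := by simp

lemma VagueTendsto.limsup_measure_le_of_isCompact [l.NeBot] [m.Regular]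
    [∀ i, IsFiniteMeasureOnCompacts (s i)] (h : VagueTendsto s l m) {K : Set X}
    (hK : IsCompact K) : limsup (fun i => s i K) l ≤ m K := by
  rw [K.measure_eq_iInf_isOpen m]
  refine le_iInf₂ fun U hKU => le_iInf fun hU => ?_
  obtain ⟨f, hfK, hfc, hfU, hf⟩ := exists_continuousMap_one_of_isCompact_subset_isOpen hK hU hKU
  calc limsup (fun i => s i K) l ≤ limsup (fun i => ENNReal.ofReal (∫ x, f x ∂s i)) l :=
        limsup_le_limsup <| .of_forall fun i =>
          (f.continuous.integrable_of_hasCompactSupport hfc).measure_le_integral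
            (.of_forall fun x => (hf x).1) fun x hx => (hfK hx).ge
    _ = ENNReal.ofReal (∫ x, f x ∂m) := (ENNReal.tendsto_ofReal (h ⟨f, hfc⟩)).limsup_eq
    _ ≤ m U := integral_le_measure (fun x _ => (hf x).2)
          fun x hx => (image_eq_zero_of_notMem_tsupport fun hx' => hx (hfU hx')).le

lemma VagueTendsto.measure_isOpen_le_measure_isCompact [l.NeBot] [m.Regular] [m'.Regular]
    [∀ i, IsFiniteMeasureOnCompacts (t i)] (h : VagueTendsto s l m) (h' : VagueTendsto t l m')
    {U : Set X} {K : Set Y} (hU : IsOpen U) (hK : IsCompact K)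
    (hle : ∀ᶠ i in l, s i U ≤ t i K) : m U ≤ m' K :=
  calc m U ≤ liminf (fun i => s i U) l := h.measure_le_liminf_of_isOpen hU
    _ ≤ limsup (fun i => t i K) l := liminf_le_limsup_of_frequently_le hle.frequently
    _ ≤ m' K := h'.limsup_measure_le_of_isCompact hK

theorem exists_regular_vagueTendsto (l : Ultrafilter ι) (s : ι → Measure X)
    [∀ i, IsFiniteMeasureOnCompacts (s i)]
    (hs : ∀ K : Set X, IsCompact K → limsup (fun i => s i K) l < ∞) :
    ∃ m : Measure X, m.Regular ∧ VagueTendsto s l m := by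
  have integrable (i : ι) (f : C_c(X, ℝ)) : Integrable f (s i) :=
    f.continuous.integrable_of_hasCompactSupport f.hasCompactSupport
  choose L hL using fun f : C_c(X, ℝ) =>
    exists_tendsto_integral_of_limsup_lt_top f (hs _ f.hasCompactSupport)
  let Λ : C_c(X, ℝ) →ₚ[ℝ] ℝ := PositiveLinearMap.mk₀
    { toFun := L
      map_add' := fun f g => tendsto_nhds_unique (hL (f + g)) <|
        ((hL f).add (hL g)).congr fun i => (integral_add (integrable i f) (integrable i g)).symm
      map_smul' := fun c f => tendsto_nhds_unique (hL (c • f)) <|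
        ((hL f).const_mul c).congr fun i => (integral_const_mul c _).symm }
    fun f hf => ge_of_tendsto' (hL f) fun i => integral_nonneg hf
  refine ⟨RealRMK.rieszMeasure Λ, inferInstance, fun f => ?_⟩
  rw [RealRMK.integral_rieszMeasure Λ f]
  exact hL f

end VagueConvergence

section PartialCoupling

variable {X Y : Type*} [MeasurableSpace X] [MeasurableSpace Y]

/-- A partial coupling of `μ` and `ν`: it matches part of `μ` to part of `ν` along the relation
`R`, and it has to match all of the mass of `μ` in `S` and all of the mass of `ν` in `T`. -/
structure IsPartialCoupling (S : Set X) (T : Set Y) (R : Set (X × Y)) (σ : Measure (X × Y))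
    (μ : Measure X) (ν : Measure Y) : Prop where
  fst_le : σ.fst ≤ μ
  snd_le : σ.snd ≤ ν
  restrict_le_fst : μ.restrict S ≤ σ.fst
  restrict_le_snd : ν.restrict T ≤ σ.snd
  ae_mem : ∀ᵐ p ∂σ, p ∈ R

variable {S : Set X} {T : Set Y} {R : Set (X × Y)} {σ : Measure (X × Y)} {μ : Measure X}
  {ν : Measure Y}

lemma IsPartialCoupling.swap (h : IsPartialCoupling S T R σ μ ν) :
    IsPartialCoupling T S (Prod.swap ⁻¹' R) (σ.map Prod.swap) ν μ where
  fst_le := by simpa using h.snd_le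
  snd_le := by simpa using h.fst_le
  restrict_le_fst := by simpa using h.restrict_le_snd
  restrict_le_snd := by simpa using h.restrict_le_fst
  ae_mem := (MeasurableEquiv.prodComm (α := X) (β := Y)).measurableEmbedding.ae_map_iff.2 <| by
    simpa [MeasurableEquiv.prodComm] using h.ae_mem

lemma IsPartialCoupling.restrict (h : IsPartialCoupling S T R σ μ ν) (hS : MeasurableSet S)
    (hT : MeasurableSet T) :
    IsPartialCoupling S T R (σ.restrict (Prod.fst ⁻¹' S ∪ Prod.snd ⁻¹' T)) μ ν where
  fst_le := (Measure.fst_mono Measure.restrict_le_self).trans h.fst_le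
  snd_le := (Measure.snd_mono Measure.restrict_le_self).trans h.snd_le
  restrict_le_fst :=
    calc μ.restrict S = (μ.restrict S).restrict S := by
          rw [Measure.restrict_restrict hS, inter_self]
      _ ≤ σ.fst.restrict S := Measure.restrict_mono_measure h.restrict_le_fst S
      _ = (σ.restrict (Prod.fst ⁻¹' S)).fst := Measure.restrict_map measurable_fst hS
      _ ≤ _ := Measure.fst_mono (Measure.restrict_mono_set σ subset_union_left)
  restrict_le_snd :=
    calc ν.restrict T = (ν.restrict T).restrict T := by
          rw [Measure.restrict_restrict hT, inter_self]
      _ ≤ σ.snd.restrict T := Measure.restrict_mono_measure h.restrict_le_snd T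
      _ = (σ.restrict (Prod.snd ⁻¹' T)).snd := Measure.restrict_map measurable_snd hT
      _ ≤ _ := Measure.snd_mono (Measure.restrict_mono_set σ subset_union_right)
  ae_mem := ae_restrict_of_ae h.ae_mem

lemma IsPartialCoupling.measure_union_lt_top (h : IsPartialCoupling S T R σ μ ν)
    (hS : MeasurableSet S) (hT : MeasurableSet T) (hμ : μ S < ∞) (hν : ν T < ∞) :
    σ (Prod.fst ⁻¹' S ∪ Prod.snd ⁻¹' T) < ∞ :=
  calc σ (Prod.fst ⁻¹' S ∪ Prod.snd ⁻¹' T) ≤ σ.fst S + σ.snd T := by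
        rw [Measure.fst_apply hS, Measure.snd_apply hT]
        exact measure_union_le _ _
    _ ≤ μ S + ν T := add_le_add (h.fst_le S) (h.snd_le T)
    _ < ∞ := ENNReal.add_lt_top.2 ⟨hμ, hν⟩

lemma isPartialCoupling_map_diag_restrict (μ : Measure X) {S T A : Set X} {R : Set (X × X)}
    (hSA : S ⊆ A) (hR : MeasurableSet R) (hdiag : ∀ x, (x, x) ∈ R) :
    IsPartialCoupling S T R ((μ.restrict A).map fun x => (x, x)) μ (μ.restrict A) := by
  have hd : Measurable fun x : X => (x, x) := by fun_prop
  have hfst : ((μ.restrict A).map fun x => (x, x)).fst = μ.restrict A := by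
    simp [Measure.fst, Measure.map_map measurable_fst hd, Function.comp_def]
  have hsnd : ((μ.restrict A).map fun x => (x, x)).snd = μ.restrict A := by
    simp [Measure.snd, Measure.map_map measurable_snd hd, Function.comp_def]
  exact
    { fst_le := hfst.trans_le Measure.restrict_le_self
      snd_le := hsnd.le
      restrict_le_fst := (Measure.restrict_mono_set μ hSA).trans_eq hfst.symm
      restrict_le_snd := Measure.restrict_le_self.trans_eq hsnd.symm
      ae_mem := (ae_map_iff hd.aemeasurable hR).2 (.of_forall hdiag) }

lemma exists_add_eq_of_restrict_le {s : Measure X} [IsFiniteMeasure s] (hS : MeasurableSet S)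
    (hs : s ≤ μ) (h : μ.restrict S ≤ s) : ∃ ρ : Measure X, s + ρ = μ ∧ ∀ᵐ x ∂ρ, x ∉ S := by
  refine ⟨μ - s, by rw [add_comm, Measure.sub_add_cancel_of_le hs],
    measure_eq_zero_iff_ae_notMem.1 (Measure.sub_apply_eq_zero_of_restrict_le_restrict ?_ hS)⟩
  simpa only [Measure.restrict_restrict hS, inter_self] using Measure.restrict_mono_measure h S

lemma IsPartialCoupling.measure_le_image_fst (h : IsPartialCoupling S T R σ μ ν)
    (K : Set (X × Y)) : σ K ≤ μ (Prod.fst '' K) :=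
  calc σ K ≤ σ (Prod.fst ⁻¹' (Prod.fst '' K)) := measure_mono (subset_preimage_image _ _)
    _ ≤ σ.fst (Prod.fst '' K) := Measure.le_map_apply measurable_fst.aemeasurable _
    _ ≤ μ (Prod.fst '' K) := h.fst_le _

variable [TopologicalSpace X] [TopologicalSpace Y]

lemma IsPartialCoupling.isFiniteMeasureOnCompacts [IsFiniteMeasureOnCompacts μ]
    (h : IsPartialCoupling S T R σ μ ν) : IsFiniteMeasureOnCompacts σ :=
  ⟨fun K hK => (h.measure_le_image_fst K).trans_lt (hK.image continuous_fst).measure_lt_top⟩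

/-- `R` is proper over `S`: the points related to a compact subset of `S` lie in a compact set.
This keeps the mass matched to a compact set from escaping in a vague limit. -/
def ProperOver (S : Set X) (R : Set (X × Y)) : Prop :=
  ∀ K ⊆ S, IsCompact K → ∃ L : Set Y, IsCompact L ∧ R ∩ Prod.fst ⁻¹' K ⊆ Prod.snd ⁻¹' L

lemma restrict_le_of_forall_isCompact_le_isOpen {m m' : Measure X} [m.InnerRegular]
    [m'.OuterRegular] (hS : MeasurableSet S)
    (h : ∀ K U, IsCompact K → IsOpen U → K ⊆ S → K ⊆ U → m K ≤ m' U) : m.restrict S ≤ m' := by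
  refine Measure.le_iff.2 fun A hA => ?_
  rw [Measure.restrict_apply hA, (hA.inter hS).measure_eq_iSup_isCompact]
  refine iSup₂_le fun K hKA => iSup_le fun hK => ?_
  calc m K ≤ m' K := by
        rw [K.measure_eq_iInf_isOpen m']
        exact le_iInf₂ fun U hKU => le_iInf fun hU =>
          h K U hK hU (hKA.trans inter_subset_right) hKU
    _ ≤ m' A := measure_mono (hKA.trans inter_subset_left)

variable {ι : Type*} {l : Filter ι} {σs : ι → Measure (X × Y)} {μs : ι → Measure X}
  {νs : ι → Measure Y} [BorelSpace X] [BorelSpace Y] [T2Space X] [LocallyCompactSpace X]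
  [SecondCountableTopology X] [T2Space Y] [LocallyCompactSpace Y] [SecondCountableTopology Y]

lemma fst_le_of_vagueTendsto [l.NeBot] [σ.Regular] [μ.Regular]
    [∀ i, IsFiniteMeasureOnCompacts (μs i)] (hσ : VagueTendsto σs l σ)
    (hμ : VagueTendsto μs l μ) (h : ∀ᶠ i in l, (σs i).fst ≤ μs i) : σ.fst ≤ μ := by
  have : σ.fst.InnerRegular := .map_of_continuous continuous_fst
  rw [← σ.fst.restrict_univ]
  refine restrict_le_of_forall_isCompact_le_isOpen .univ fun K U hK hU _ hKU => ?_
  obtain ⟨V, hV, hKV, hVU, hVc⟩ := exists_open_between_and_isCompact_closure hK hU hKU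
  calc σ.fst K ≤ σ.fst V := measure_mono hKV
    _ = σ (Prod.fst ⁻¹' V) := Measure.fst_apply hV.measurableSet
    _ ≤ μ (closure V) := by
        refine hσ.measure_isOpen_le_measure_isCompact hμ (hV.preimage continuous_fst) hVc ?_
        filter_upwards [h] with i hi
        rw [← Measure.fst_apply hV.measurableSet]
        exact (hi V).trans (measure_mono subset_closure)
    _ ≤ μ U := measure_mono hVU

lemma restrict_le_fst_of_vagueTendsto [l.NeBot] [σ.Regular] [μ.Regular]
    [∀ i, IsFiniteMeasureOnCompacts (σs i)] (hσ : VagueTendsto σs l σ)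
    (hμ : VagueTendsto μs l μ) (hσμ : σ.fst ≤ μ) (hS : IsOpen S) (hRS : ProperOver S R)
    (h : ∀ᶠ i in l, (μs i).restrict S ≤ (σs i).fst) (hR : ∀ᶠ i in l, ∀ᵐ p ∂σs i, p ∈ R) :
    μ.restrict S ≤ σ.fst := by
  have : IsFiniteMeasureOnCompacts σ.fst :=
    ⟨fun K hK => (hσμ K).trans_lt hK.measure_lt_top⟩
  refine restrict_le_of_forall_isCompact_le_isOpen hS.measurableSet fun K U hK hU hKS hKU => ?_
  obtain ⟨V, hV, hKV, hVUS, hVc⟩ :=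
    exists_open_between_and_isCompact_closure hK (hU.inter hS) (subset_inter hKU hKS)
  have hVS : V ⊆ S := subset_closure.trans (hVUS.trans inter_subset_right)
  obtain ⟨L, hL, hRL⟩ := hRS (closure V) (hVUS.trans inter_subset_right) hVc
  calc μ K ≤ μ V := measure_mono hKV
    _ ≤ σ (closure V ×ˢ L) := by
        refine hμ.measure_isOpen_le_measure_isCompact hσ hV (hVc.prod hL) ?_
        filter_upwards [h, hR] with i hi hRi
        calc μs i V = (μs i).restrict S V := (Measure.restrict_eq_self _ hVS).symm
          _ ≤ (σs i).fst V := hi V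
          _ = σs i (Prod.fst ⁻¹' V) := Measure.fst_apply hV.measurableSet
          _ ≤ σs i (closure V ×ˢ L) := measure_mono_ae <| by
              filter_upwards [hRi] with p hp hpV
              exact ⟨subset_closure hpV, hRL ⟨hp, subset_closure hpV⟩⟩
    _ ≤ σ (Prod.fst ⁻¹' U) := measure_mono fun p hp => (hVUS hp.1).1
    _ = σ.fst U := (Measure.fst_apply hU.measurableSet).symm

theorem IsPartialCoupling.of_vagueTendsto [l.NeBot] [σ.Regular] [μ.Regular] [ν.Regular]
    [∀ i, IsFiniteMeasureOnCompacts (σs i)] [∀ i, IsFiniteMeasureOnCompacts (μs i)]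
    [∀ i, IsFiniteMeasureOnCompacts (νs i)] (hσ : VagueTendsto σs l σ) (hμ : VagueTendsto μs l μ)
    (hν : VagueTendsto νs l ν) (hS : IsOpen S) (hT : IsOpen T) (hR : IsClosed R)
    (hRS : ProperOver S R) (hRT : ProperOver T (Prod.swap ⁻¹' R))
    (h : ∀ᶠ i in l, IsPartialCoupling S T R (σs i) (μs i) (νs i)) :
    IsPartialCoupling S T R σ μ ν := by
  have hswap : VagueTendsto (fun i => (σs i).map Prod.swap) l (σ.map Prod.swap) :=
    hσ.map_homeomorph (Homeomorph.prodComm X Y)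
  have : (σ.map Prod.swap).Regular := Measure.Regular.map (Homeomorph.prodComm X Y)
  have (i : ι) : IsFiniteMeasureOnCompacts ((σs i).map Prod.swap) :=
    Measure.IsFiniteMeasureOnCompacts.map (σs i) (Homeomorph.prodComm X Y)
  have hfst : σ.fst ≤ μ := fst_le_of_vagueTendsto hσ hμ (h.mono fun _ hi => hi.fst_le)
  have hsnd : (σ.map Prod.swap).fst ≤ ν :=
    fst_le_of_vagueTendsto hswap hν (h.mono fun _ hi => hi.swap.fst_le)
  exact
    { fst_le := hfst
      snd_le := by simpa using hsnd
      restrict_le_fst := restrict_le_fst_of_vagueTendsto hσ hμ hfst hS hRS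
        (h.mono fun _ hi => hi.restrict_le_fst) (h.mono fun _ hi => hi.ae_mem)
      restrict_le_snd := by
        simpa using restrict_le_fst_of_vagueTendsto hswap hν hsnd hT hRT
          (h.mono fun _ hi => hi.swap.restrict_le_fst) (h.mono fun _ hi => hi.swap.ae_mem)
      ae_mem := hσ.ae_mem_of_isClosed hR (h.mono fun _ hi => hi.ae_mem) }

theorem exists_isPartialCoupling_of_vagueTendsto {l : Ultrafilter ι} [μ.Regular] [ν.Regular]
    [∀ i, IsFiniteMeasureOnCompacts (μs i)] [∀ i, IsFiniteMeasureOnCompacts (νs i)]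
    (hμ : VagueTendsto μs l μ) (hν : VagueTendsto νs l ν) (hS : IsOpen S) (hT : IsOpen T)
    (hR : IsClosed R) (hRS : ProperOver S R) (hRT : ProperOver T (Prod.swap ⁻¹' R))
    (h : ∀ᶠ i in l, ∃ σ, IsPartialCoupling S T R σ (μs i) (νs i)) :
    ∃ σ, IsPartialCoupling S T R σ μ ν := by
  obtain ⟨σs, hσs, hcoupling⟩ : ∃ σs : ι → Measure (X × Y),
      (∀ i, IsFiniteMeasureOnCompacts (σs i)) ∧
        ∀ᶠ i in l, IsPartialCoupling S T R (σs i) (μs i) (νs i) := by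
    have (i : ι) : ∃ σ, IsFiniteMeasureOnCompacts σ ∧
        ((∃ σ, IsPartialCoupling S T R σ (μs i) (νs i)) →
          IsPartialCoupling S T R σ (μs i) (νs i)) := by
      by_cases hi : ∃ σ, IsPartialCoupling S T R σ (μs i) (νs i)
      · obtain ⟨σ, hσ⟩ := hi
        exact ⟨σ, hσ.isFiniteMeasureOnCompacts, fun _ => hσ⟩
      · exact ⟨0, inferInstance, fun hi' => absurd hi' hi⟩
    choose σs hσs hcoupling using this
    exact ⟨σs, hσs, h.mono hcoupling⟩
  have hbound (K : Set (X × Y)) (hK : IsCompact K) : limsup (fun i => σs i K) l < ∞ :=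
    calc limsup (fun i => σs i K) l ≤ limsup (fun i => μs i (Prod.fst '' K)) l :=
          limsup_le_limsup (hcoupling.mono fun _ hi => hi.measure_le_image_fst K)
      _ ≤ μ (Prod.fst '' K) := hμ.limsup_measure_le_of_isCompact (hK.image continuous_fst)
      _ < ∞ := (hK.image continuous_fst).measure_lt_top
  obtain ⟨σ, _, hσ⟩ := exists_regular_vagueTendsto l σs hbound
  exact ⟨σ, .of_vagueTendsto hσ hμ hν hS hT hR hRS hRT hcoupling⟩

end PartialCoupling

section Support

variable {α : Type*} [TopologicalSpace α] [MeasurableSpace α]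

lemma msupport_eq_support (μ : Measure α) : msupport μ = μ.support :=
  Set.ext fun x => (Measure.mem_support_iff_forall x).symm

lemma iSup_msupport_ofReal_le_iff [HereditarilyLindelofSpace α] {μ : Measure α} {f : α → ℝ}
    (hf : Continuous f) {c : ℝ} (hc : 0 ≤ c) :
    ⨆ x ∈ msupport μ, ENNReal.ofReal (f x) ≤ ENNReal.ofReal c ↔ ∀ᵐ x ∂μ, f x ≤ c := by
  simp only [iSup_le_iff, ENNReal.ofReal_le_ofReal_iff hc, msupport_eq_support]
  exact ⟨fun h => Filter.mem_of_superset Measure.support_mem_ae h,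
    fun h => Measure.support_subset_of_isClosed (isClosed_le hf continuous_const) h⟩

lemma RadonOn.of_isClosed {S : Set α} (hS : IsClosed S) (m : Measure α) [m.Regular]
    (hm : m Sᶜ = 0) : RadonOn S m := by
  have inter_S (A : Set α) : m (A ∩ S) = m A := measure_inter_conull hm
  refine ⟨hm, fun U hU => le_antisymm ?_ ?_, fun E _ _ => ?_, fun K _ hK => hK.measure_lt_top⟩
  · rw [inter_S, hU.measure_eq_iSup_isCompact]
    refine iSup₂_le fun K hKU => iSup_le fun hK => ?_
    rw [← inter_S]
    exact le_iSup₂_of_le (K ∩ S) (inter_subset_inter_left S hKU)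
      (le_iSup_of_le (hK.inter_right hS) le_rfl)
  · exact iSup₂_le fun K hK => iSup_le fun _ => measure_mono hK
  · simp only [inter_S]
    rw [E.measure_eq_iInf_isOpen]
    exact iInf_congr fun U => iInf_comm

lemma RadonOn.map_val {S : Set α} (hS : MeasurableSet S) (m : Measure S) [m.Regular] :
    RadonOn S (m.map Subtype.val) := by
  have map_apply := (MeasurableEmbedding.subtype_coe hS).map_apply m
  refine ⟨by simp [map_apply], fun U hU => le_antisymm ?_ ?_, fun E hES _ => le_antisymm ?_ ?_,
    fun K hKS hK => ?_⟩
  · rw [map_apply, preimage_inter, Subtype.coe_preimage_self, inter_univ,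
      (hU.preimage continuous_subtype_val).measure_eq_iSup_isCompact]
    refine iSup₂_le fun K hKU => iSup_le fun hK => ?_
    refine le_iSup₂_of_le (Subtype.val '' K) ?_
      (le_iSup_of_le (hK.image continuous_subtype_val) ?_)
    · exact subset_inter (image_subset_iff.2 hKU) (Subtype.coe_image_subset S K)
    · rw [map_apply, preimage_image_eq _ Subtype.val_injective]
  · exact iSup₂_le fun K hK => iSup_le fun _ => measure_mono hK
  · exact le_iInf₂ fun U _ => le_iInf fun hEU => measure_mono (subset_inter hEU hES)
  · rw [map_apply, (Subtype.val ⁻¹' E).measure_eq_iInf_isOpen m]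
    refine le_iInf₂ fun V hEV => le_iInf fun hV => ?_
    obtain ⟨U, hU, rfl⟩ := isOpen_induced_iff.1 hV
    refine iInf₂_le_of_le U hU (iInf_le_of_le (fun x hx => ?_) ?_)
    · exact @hEV ⟨x, hES hx⟩ hx
    · rw [map_apply]
      exact measure_mono (preimage_mono inter_subset_left)
  · rw [map_apply]
    exact (Topology.IsInducing.subtypeVal.isCompact_preimage_iff
      (by simpa using hKS)).2 hK |>.measure_lt_top

lemma RadonOn.map_comap_val {S : Set α} (hS : MeasurableSet S) {μ : Measure α}
    (h : RadonOn S μ) : (μ.comap ((↑) : S → α)).map (↑) = μ := by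
  rw [map_comap_subtype_coe hS, Measure.restrict_eq_self_of_ae_mem (mem_ae_iff.2 h.1)]

end Support

section Plane

/-- The lifetime `d - b` of a point `(b, d)` of a persistence diagram. -/
def lifetime (x : P2) : ℝ := x.2 - x.1

lemma continuous_lifetime : Continuous lifetime := continuous_snd.sub continuous_fst

lemma mem_Wbd {x : P2} : x ∈ Wbd ↔ 0 < lifetime x := (sub_pos (a := x.2)).symm

lemma isOpen_Wbd : IsOpen Wbd := isOpen_lt continuous_fst continuous_snd

lemma mem_Wcl {x : P2} : x ∈ Wcl ↔ 0 ≤ lifetime x := by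
  refine ⟨fun hx => sub_nonneg.2 (closure_lt_subset_le continuous_fst continuous_snd hx),
    fun hx => ?_⟩
  have hlim : Tendsto (fun t : ℝ => (x.1, x.2 + t)) (𝓝[>] 0) (𝓝 x) := by
    have hc : Continuous fun t : ℝ => (x.1, x.2 + t) := by fun_prop
    simpa using hc.tendsto 0 |>.mono_left nhdsWithin_le_nhds
  refine mem_closure_of_tendsto hlim (eventually_mem_nhdsWithin.mono fun t (ht : 0 < t) => ?_)
  exact (sub_nonneg.1 hx).trans_lt (lt_add_of_pos_right _ ht)

lemma abs_lifetime_sub_le (x y : P2) : |lifetime x - lifetime y| ≤ 2 * dist x y :=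
  calc |lifetime x - lifetime y| = |(x.2 - y.2) - (x.1 - y.1)| := by
        unfold lifetime; congr 1; ring
    _ ≤ |x.2 - y.2| + |x.1 - y.1| := abs_sub _ _
    _ ≤ dist x y + dist x y := add_le_add (le_max_right _ _) (le_max_left _ _)
    _ = 2 * dist x y := (two_mul _).symm

lemma mem_Wbd_of_dist_le {x y : P2} {δ : ℝ} (hx : 2 * δ < lifetime x) (h : dist x y ≤ δ) :
    y ∈ Wbd := by
  rw [mem_Wbd]
  linarith [le_abs_self (lifetime x - lifetime y), abs_lifetime_sub_le x y]

lemma distDiag_eq (x : P2) : distDiag x = |lifetime x| / 2 := by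
  have lifetime_diag (y : P2) (hy : y.1 = y.2) : lifetime y = 0 := by simp [lifetime, hy]
  apply le_antisymm
  · have hmid : (((x.1 + x.2) / 2, (x.1 + x.2) / 2) : P2) ∈ Diag := rfl
    have hfst : x.1 - (x.1 + x.2) / 2 = -(lifetime x / 2) := by unfold lifetime; ring
    have hsnd : x.2 - (x.1 + x.2) / 2 = lifetime x / 2 := by unfold lifetime; ring
    calc distDiag x ≤ dist x ((x.1 + x.2) / 2, (x.1 + x.2) / 2) :=
          Metric.infDist_le_dist_of_mem hmid
      _ = |lifetime x| / 2 := by simp [Prod.dist_eq, Real.dist_eq, hfst, hsnd, abs_div]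
  · have hne : Diag.Nonempty := ⟨(0, 0), rfl⟩
    refine (Metric.le_infDist hne).2 fun y hy => ?_
    have := abs_lifetime_sub_le x y
    rw [lifetime_diag y hy, sub_zero] at this
    linarith

lemma continuous_dW : Continuous fun p : P2 × P2 => dW p.1 p.2 := by
  have hdiag : Continuous distDiag := Metric.continuous_infDist_pt Diag
  exact continuous_dist.min ((hdiag.comp continuous_fst).add (hdiag.comp continuous_snd))

lemma dW_comm (x y : P2) : dW x y = dW y x := by rw [dW, dW, dist_comm, add_comm]

lemma dist_le_of_dW_le {x y : P2} {δ : ℝ} (hx : 2 * δ < lifetime x) (h : dW x y ≤ δ) :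
    dist x y ≤ δ := by
  refine (min_le_iff.1 h).resolve_right fun hdiag => ?_
  rw [distDiag_eq, distDiag_eq] at hdiag
  linarith [le_abs_self (lifetime x), abs_nonneg (lifetime y)]

lemma costInf_le_ofReal_iff {π : Measure (P2 × P2)} {δ : ℝ} (hδ : 0 ≤ δ) :
    costInf π ≤ ENNReal.ofReal δ ↔ ∀ᵐ p ∂π, dW p.1 p.2 ≤ δ :=
  iSup_msupport_ofReal_le_iff continuous_dW hδ

end Plane

section OffDiagonal

instance : LocallyCompactSpace Wbd := isOpen_Wbd.locallyCompactSpace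

lemma measurableEmbedding_val_Wbd : MeasurableEmbedding ((↑) : Wbd → P2) :=
  .subtype_coe isOpen_Wbd.measurableSet

/-- The set `W_ε` as a subset of the type of points of the birth-death plane. -/
def farDiag (ε : ℝ) : Set Wbd := {x | ε < lifetime x}

lemma preimage_val_Weps (ε : ℝ) : ((↑) : Wbd → P2) ⁻¹' Weps ε = farDiag ε := rfl

lemma isOpen_farDiag (ε : ℝ) : IsOpen (farDiag ε) :=
  isOpen_lt continuous_const (continuous_lifetime.comp continuous_subtype_val)

lemma measurableSet_farDiag (ε : ℝ) : MeasurableSet (farDiag ε) := (isOpen_farDiag ε).measurableSet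

lemma farDiag_anti : Antitone farDiag := fun _ _ h _ hx => lt_of_le_of_lt h hx

lemma exists_subset_farDiag {K : Set Wbd} (hK : IsCompact K) : ∃ ε > 0, K ⊆ farDiag ε := by
  obtain ⟨c, hc, hcK⟩ := hK.exists_forall_le'
    (continuous_lifetime.comp continuous_subtype_val).continuousOn fun x _ => mem_Wbd.1 x.2
  exact ⟨c / 2, half_pos hc, fun x hx => (half_lt_self hc).trans_le (hcK x hx)⟩

/-- Off-diagonal finiteness, for measures on the type of points of the birth-death plane. -/
def OffDiagFinite (m : Measure Wbd) : Prop := ∀ ε > 0, m (farDiag ε) < ∞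

lemma OffDiagFinite.mono {m m' : Measure Wbd} (h : OffDiagFinite m') (hm : m ≤ m') :
    OffDiagFinite m := fun ε hε => (hm _).trans_lt (h ε hε)

lemma OffDiagFinite.isFiniteMeasureOnCompacts {m : Measure Wbd} (h : OffDiagFinite m) :
    IsFiniteMeasureOnCompacts m where
  lt_top_of_isCompact K hK := by
    obtain ⟨ε, hε, hKε⟩ := exists_subset_farDiag hK
    exact (measure_mono hKε).trans_lt (h ε hε)

lemma persInf_map_val_le_ofReal_iff {m : Measure Wbd} {c : ℝ} (hc : 0 ≤ c) :
    persInf (m.map (↑)) ≤ ENNReal.ofReal c ↔ m (farDiag (2 * c)) = 0 := by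
  have hdiag : Continuous distDiag := Metric.continuous_infDist_pt Diag
  rw [persInf, iSup_msupport_ofReal_le_iff hdiag hc, measurableEmbedding_val_Wbd.ae_map_iff,
    measure_eq_zero_iff_ae_notMem]
  refine eventually_congr (.of_forall fun x => ?_)
  rw [distDiag_eq, abs_of_pos (mem_Wbd.1 x.2), div_le_iff₀' two_pos, farDiag, mem_ofPred, not_lt]

lemma persInf_map_val_lt_top_iff {m : Measure Wbd} :
    persInf (m.map (↑)) < ∞ ↔ ∃ R, m (farDiag R) = 0 := by
  refine ⟨fun h => ⟨2 * (persInf (m.map (↑))).toReal, ?_⟩, fun ⟨R, hR⟩ => ?_⟩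
  · rw [← persInf_map_val_le_ofReal_iff ENNReal.toReal_nonneg, ENNReal.ofReal_toReal h.ne]
  · have hR' : m (farDiag (2 * (|R| / 2))) = 0 :=
      measure_mono_null (farDiag_anti (by linarith [le_abs_self R])) hR
    exact ((persInf_map_val_le_ofReal_iff (by positivity)).2 hR').trans_lt ENNReal.ofReal_lt_top

lemma map_val_mem_Mf_iff {m : Measure Wbd} :
    m.map (↑) ∈ Mf ↔ OffDiagFinite m ∧ ∃ R, m (farDiag R) = 0 := by
  have hfin : (∀ ε : ℝ, 0 < ε → m.map (↑) (Weps ε) < ⊤) ↔ OffDiagFinite m := by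
    simp only [measurableEmbedding_val_Wbd.map_apply, preimage_val_Weps]
    rfl
  refine ⟨fun h => ⟨hfin.1 h.2, persInf_map_val_lt_top_iff.1 h.1.2⟩, fun ⟨h, hR⟩ => ?_⟩
  have := h.isFiniteMeasureOnCompacts
  exact ⟨⟨.map_val isOpen_Wbd.measurableSet m, persInf_map_val_lt_top_iff.2 hR⟩, hfin.2 h⟩

lemma exists_map_val_eq_of_mem_Mf {μ : Measure P2} (hμ : μ ∈ Mf) :
    ∃ m : Measure Wbd, m.map (↑) = μ ∧ OffDiagFinite m ∧ ∃ R, m (farDiag R) = 0 := by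
  have hmap : (μ.comap ((↑) : Wbd → P2)).map (↑) = μ :=
    hμ.1.1.map_comap_val isOpen_Wbd.measurableSet
  exact ⟨_, hmap, map_val_mem_Mf_iff.1 (hmap.symm ▸ hμ)⟩

lemma properOver_dist_le {δ : ℝ} (hδ : 0 ≤ δ) :
    ProperOver (farDiag (2 * δ)) {p : Wbd × Wbd | dist p.1 p.2 ≤ δ} := by
  intro K hKδ hK
  have hK' : IsCompact (Subtype.val '' K) := hK.image continuous_subtype_val
  have hsub : Metric.cthickening δ (Subtype.val '' K) ⊆ Wbd := by
    rw [hK'.cthickening_eq_biUnion_closedBall hδ, iUnion₂_subset_iff]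
    rintro _ ⟨x, hx, rfl⟩ y hyx
    exact mem_Wbd_of_dist_le (hKδ hx) ((dist_comm _ _).trans_le hyx)
  refine ⟨Subtype.val ⁻¹' Metric.cthickening δ (Subtype.val '' K), ?_, fun p hp => ?_⟩
  · exact (Topology.IsInducing.subtypeVal.isCompact_preimage_iff
      (by rwa [Subtype.range_coe])).2 hK'.cthickening
  · exact Metric.mem_cthickening_of_dist_le _ p.1.1 _ _ (mem_image_of_mem _ hp.2)
      (by rw [dist_comm]; exact hp.1)

end OffDiagonal

section Matching

/-- A matching of `μ` and `ν` along pairs of points at distance at most `δ`, under which only mass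
within distance `δ` of the diagonal may remain unmatched. -/
abbrev IsPartialMatching (δ : ℝ) (σ : Measure (Wbd × Wbd)) (μ ν : Measure Wbd) : Prop :=
  IsPartialCoupling (farDiag (2 * δ)) (farDiag (2 * δ)) {p | dist p.1 p.2 ≤ δ} σ μ ν

variable {δ : ℝ} {σ : Measure (Wbd × Wbd)} {μ ν : Measure Wbd}

lemma preimage_swap_dist_le (δ : ℝ) :
    Prod.swap ⁻¹' {p : Wbd × Wbd | dist p.1 p.2 ≤ δ} = {p | dist p.1 p.2 ≤ δ} := by
  ext p
  simp [dist_comm]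

lemma isClosed_dist_le (δ : ℝ) : IsClosed {p : Wbd × Wbd | dist p.1 p.2 ≤ δ} :=
  isClosed_le continuous_dist continuous_const

lemma IsPartialMatching.symm (h : IsPartialMatching δ σ μ ν) :
    IsPartialMatching δ (σ.map Prod.swap) ν μ := by
  simpa only [preimage_swap_dist_le] using h.swap

lemma IsPartialMatching.measure_farDiag_le (h : IsPartialMatching δ σ μ ν) {a : ℝ} (ha : 0 ≤ a) :
    μ (farDiag (a + 2 * δ)) ≤ ν (farDiag a) :=
  calc μ (farDiag (a + 2 * δ)) = μ.restrict (farDiag (2 * δ)) (farDiag (a + 2 * δ)) :=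
        (Measure.restrict_eq_self _ (farDiag_anti (le_add_of_nonneg_left ha))).symm
    _ ≤ σ.fst (farDiag (a + 2 * δ)) := h.restrict_le_fst _
    _ = σ (Prod.fst ⁻¹' farDiag (a + 2 * δ)) := Measure.fst_apply (measurableSet_farDiag _)
    _ ≤ σ (Prod.snd ⁻¹' farDiag a) := measure_mono_ae <| by
        filter_upwards [h.ae_mem] with p (hp : dist p.1.1 p.2.1 ≤ δ)
          (hfst : a + 2 * δ < lifetime p.1)
        change a < lifetime p.2
        linarith [le_abs_self (lifetime p.1 - lifetime p.2), abs_lifetime_sub_le p.1.1 p.2.1]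
    _ = σ.snd (farDiag a) := (Measure.snd_apply (measurableSet_farDiag _)).symm
    _ ≤ ν (farDiag a) := h.snd_le _

lemma exists_isPartialMatching_of_vagueTendsto {ι : Type*} {l : Ultrafilter ι}
    {μs νs : ι → Measure Wbd} [μ.Regular] [ν.Regular] [∀ i, IsFiniteMeasureOnCompacts (μs i)]
    [∀ i, IsFiniteMeasureOnCompacts (νs i)] (hδ : 0 ≤ δ) (hμ : VagueTendsto μs l μ)
    (hν : VagueTendsto νs l ν) (h : ∀ᶠ i in l, ∃ σ, IsPartialMatching δ σ (μs i) (νs i)) :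
    ∃ σ, IsPartialMatching δ σ μ ν :=
  exists_isPartialCoupling_of_vagueTendsto hμ hν (isOpen_farDiag _) (isOpen_farDiag _)
    (isClosed_dist_le δ) (properOver_dist_le hδ)
    (by rw [preimage_swap_dist_le]; exact properOver_dist_le hδ) h

end Matching

section Comap

variable {X X' Z Z' : Type*} [MeasurableSpace X] [MeasurableSpace X'] [MeasurableSpace Z]
  [MeasurableSpace Z'] {e : Z → Z'} {f : X → X'} {p : Z → X} {p' : Z' → X'}

lemma map_comap_le_comap_map (he : MeasurableEmbedding e) (hf : MeasurableEmbedding f)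
    (hp : Measurable p) (hp' : Measurable p') (hcomm : ∀ z, p' (e z) = f (p z))
    (π : Measure Z') : (π.comap e).map p ≤ (π.map p').comap f := by
  refine Measure.le_iff.2 fun A hA => ?_
  rw [Measure.map_apply hp hA, he.comap_apply, hf.comap_apply,
    Measure.map_apply hp' (hf.measurableSet_image.2 hA)]
  refine measure_mono (image_subset_iff.2 fun z hz => ?_)
  exact ⟨p z, hz, (hcomm z).symm⟩

lemma restrict_comap_map_le_map_restrict_comap (he : MeasurableEmbedding e)
    (hf : MeasurableEmbedding f) (hp : Measurable p) (hp' : Measurable p')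
    (hcomm : ∀ z, p' (e z) = f (p z)) {π : Measure Z'} {S : Set X} (hS : MeasurableSet S)
    {D : Set Z} (h : ∀ᵐ z ∂π, p' z ∈ f '' S → z ∈ e '' D) :
    ((π.map p').comap f).restrict S ≤ ((π.comap e).restrict D).map p := by
  refine Measure.le_iff.2 fun A hA => ?_
  rw [Measure.restrict_apply hA, Measure.map_apply hp hA, Measure.restrict_apply (hp hA),
    he.comap_apply, hf.comap_apply, Measure.map_apply hp' (hf.measurableSet_image.2 (hA.inter hS))]
  refine measure_mono_ae ?_
  filter_upwards [h] with z hz hzA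
  obtain ⟨x, ⟨hxA, hxS⟩, hxz⟩ : p' z ∈ f '' (A ∩ S) := hzA
  obtain ⟨w, hwD, rfl⟩ := hz ⟨x, hxS, hxz⟩
  have hwA : p w ∈ A := by rwa [← hf.injective (hxz.trans (hcomm w))]
  exact ⟨w, ⟨hwA, hwD⟩, rfl⟩

variable {X Y : Type*} [MeasurableSpace X] [MeasurableSpace Y]

lemma measure_prod_eq_fst {π : Measure (X × Y)} {S : Set X} {T : Set Y}
    (hπ : π (S ×ˢ T)ᶜ = 0) {A : Set X} (hA : MeasurableSet A) : π (A ×ˢ T) = π.fst A := by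
  rw [Measure.fst_apply hA]
  refine measure_congr ?_
  filter_upwards [mem_ae_iff.2 hπ] with p hp
  exact propext (and_iff_left hp.2)

lemma measure_prod_eq_snd {π : Measure (X × Y)} {S : Set X} {T : Set Y}
    (hπ : π (S ×ˢ T)ᶜ = 0) {B : Set Y} (hB : MeasurableSet B) : π (S ×ˢ B) = π.snd B := by
  rw [Measure.snd_apply hB]
  refine measure_congr ?_
  filter_upwards [mem_ae_iff.2 hπ] with p hp
  exact propext (and_iff_right hp.1)

lemma comap_val_eq_iff {S : Set X} (hS : MeasurableSet S) {ρ : Measure X} {μ : Measure S} :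
    ρ.comap (↑) = μ ↔ ∀ A ⊆ S, MeasurableSet A → ρ A = μ.map (↑) A := by
  have hval : MeasurableEmbedding ((↑) : S → X) := .subtype_coe hS
  refine ⟨?_, fun h => ?_⟩
  · rintro rfl A hA _
    rw [map_comap_subtype_coe hS, Measure.restrict_eq_self _ hA]
  · ext A hA
    rw [hval.comap_apply, h _ (Subtype.coe_image_subset S A) (hval.measurableSet_image.2 hA),
      hval.map_apply, preimage_image_eq _ Subtype.val_injective]

end Comap

section Coupling

variable {δ : ℝ} {μ ν : Measure Wbd}

lemma isCoupling_map_val_iff {π : Measure (P2 × P2)} :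
    IsCoupling π (μ.map (↑)) (ν.map (↑)) ↔
      RadonOn (Wcl ×ˢ Wcl) π ∧ π.fst.comap (↑) = μ ∧ π.snd.comap (↑) = ν := by
  refine and_congr_right fun hπ => ?_
  rw [comap_val_eq_iff isOpen_Wbd.measurableSet, comap_val_eq_iff isOpen_Wbd.measurableSet]
  refine and_congr ?_ ?_ <;> refine forall₃_congr fun A _ hA => ?_
  · rw [measure_prod_eq_fst hπ.1 hA]
  · rw [measure_prod_eq_snd hπ.1 hA]

lemma IsCoupling.isPartialMatching {π : Measure (P2 × P2)}
    (hπ : IsCoupling π (μ.map (↑)) (ν.map (↑))) (hcost : ∀ᵐ p ∂π, dW p.1 p.2 ≤ δ) :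
    IsPartialMatching δ ((π.comap (Prod.map (↑) (↑))).restrict {p | dist p.1 p.2 ≤ δ}) μ ν := by
  obtain ⟨-, rfl, rfl⟩ := isCoupling_map_val_iff.1 hπ
  have hval := measurableEmbedding_val_Wbd
  have he := hval.prodMap hval
  refine
    { fst_le := (Measure.fst_mono Measure.restrict_le_self).trans
        (map_comap_le_comap_map he hval measurable_fst measurable_fst (fun _ => rfl) π)
      snd_le := (Measure.snd_mono Measure.restrict_le_self).trans
        (map_comap_le_comap_map he hval measurable_snd measurable_snd (fun _ => rfl) π)
      restrict_le_fst := restrict_comap_map_le_map_restrict_comap he hval measurable_fst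
        measurable_fst (fun _ => rfl) (measurableSet_farDiag _) ?_
      restrict_le_snd := restrict_comap_map_le_map_restrict_comap he hval measurable_snd
        measurable_snd (fun _ => rfl) (measurableSet_farDiag _) ?_
      ae_mem := ae_restrict_mem (isClosed_dist_le δ).measurableSet }
  · filter_upwards [hcost]
    rintro ⟨_, y⟩ hxy ⟨x, hx, rfl⟩
    have hdist : dist x.1 y ≤ δ := dist_le_of_dW_le hx hxy
    exact ⟨(x, ⟨y, mem_Wbd_of_dist_le hx hdist⟩), hdist, rfl⟩
  · filter_upwards [hcost]
    rintro ⟨x, _⟩ hxy ⟨y, hy, rfl⟩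
    have hdist : dist y.1 x ≤ δ := dist_le_of_dW_le hy ((dW_comm _ _).trans_le hxy)
    exact ⟨(⟨x, mem_Wbd_of_dist_le hy hdist⟩, y), (dist_comm _ _).trans_le hdist, rfl⟩

lemma exists_isPartialMatching_of_OT_lt
    (h : OT (μ.map (↑)) (ν.map (↑)) < ENNReal.ofReal δ) :
    ∃ σ, IsPartialMatching δ σ μ ν := by
  obtain ⟨π, hπ, hcost⟩ := by simpa only [OT, iInf_lt_iff] using h
  have hδ : 0 ≤ δ := (ENNReal.ofReal_pos.1 (pos_of_gt h)).le
  exact ⟨_, hπ.isPartialMatching ((costInf_le_ofReal_iff hδ).1 hcost.le)⟩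

end Coupling

section DiagonalPlan

/-- A point of the diagonal that escapes to infinity as `x` approaches the diagonal. Sending `x`
there, rather than to a nearest diagonal point, lets only finite mass land in a compact set. -/
def escape (x : Wbd) : P2 := ((lifetime x)⁻¹, (lifetime x)⁻¹)

lemma measurable_escape : Measurable escape := by
  have h : Measurable fun x : Wbd => (lifetime x)⁻¹ :=
    (continuous_lifetime.measurable.comp measurable_subtype_coe).inv
  exact h.prodMk h

lemma lifetime_escape (x : Wbd) : lifetime (escape x) = 0 := sub_self _

lemma dW_escape_le {δ : ℝ} {x : Wbd} (hx : x ∉ farDiag (2 * δ)) : dW x (escape x) ≤ δ := by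
  have hlife : lifetime x ≤ 2 * δ := not_lt.1 hx
  refine (min_le_right _ _).trans ?_
  rw [distDiag_eq, distDiag_eq, lifetime_escape, abs_zero, abs_of_pos (mem_Wbd.1 x.2)]
  linarith

lemma exists_preimage_escape_subset_farDiag {B : Set P2} (hB : IsCompact B) :
    ∃ ε > 0, escape ⁻¹' B ⊆ farDiag ε := by
  obtain ⟨R, hR, hBR⟩ := hB.isBounded.exists_pos_norm_lt
  refine ⟨R⁻¹, inv_pos.2 hR, fun x hx => inv_lt_of_inv_lt₀ (mem_Wbd.1 x.2) ?_⟩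
  calc (lifetime x)⁻¹ ≤ |(lifetime x)⁻¹| := le_abs_self _
    _ ≤ ‖escape x‖ := norm_fst_le (escape x)
    _ < R := hBR _ hx

lemma OffDiagFinite.measure_preimage_escape_lt_top {ρ : Measure Wbd} (hρ : OffDiagFinite ρ)
    {B : Set P2} (hB : IsCompact B) : ρ (escape ⁻¹' B) < ∞ := by
  obtain ⟨ε, hε, hBε⟩ := exists_preimage_escape_subset_farDiag hB
  exact (measure_mono hBε).trans_lt (hρ ε hε)

/-- The transport plan which moves mass along `s` and sends the remaining mass, `ρ₁` of the source
and `ρ₂` of the target, to the diagonal. -/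
def diagonalPlan (s : Measure (Wbd × Wbd)) (ρ₁ ρ₂ : Measure Wbd) : Measure (P2 × P2) :=
  s.map (Prod.map (↑) (↑)) + ρ₁.map (fun x : Wbd => ((x : P2), escape x)) +
    ρ₂.map (fun y : Wbd => (escape y, (y : P2)))

variable {s : Measure (Wbd × Wbd)} {ρ₁ ρ₂ : Measure Wbd}

lemma measurable_val_prodMk_escape : Measurable fun x : Wbd => ((x : P2), escape x) :=
  measurable_subtype_coe.prodMk measurable_escape

lemma measurable_escape_prodMk_val : Measurable fun y : Wbd => (escape y, (y : P2)) :=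
  measurable_escape.prodMk measurable_subtype_coe

lemma measurable_prodMap_val : Measurable (Prod.map ((↑) : Wbd → P2) ((↑) : Wbd → P2)) :=
  measurable_subtype_coe.prodMap measurable_subtype_coe

lemma ae_diagonalPlan_iff {p : P2 × P2 → Prop} (hp : MeasurableSet {z | p z}) :
    (∀ᵐ z ∂diagonalPlan s ρ₁ ρ₂, p z) ↔
      ((∀ᵐ z ∂s, p (z.1, z.2)) ∧ ∀ᵐ x : Wbd ∂ρ₁, p (x, escape x)) ∧
        ∀ᵐ y : Wbd ∂ρ₂, p (escape y, y) := by
  rw [diagonalPlan, ae_add_measure_iff, ae_add_measure_iff,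
    ae_map_iff measurable_prodMap_val.aemeasurable hp,
    ae_map_iff measurable_val_prodMk_escape.aemeasurable hp,
    ae_map_iff measurable_escape_prodMk_val.aemeasurable hp]
  rfl

lemma comap_map_escape (ρ : Measure Wbd) : (ρ.map escape).comap ((↑) : Wbd → P2) = 0 := by
  refine (comap_val_eq_iff isOpen_Wbd.measurableSet).2 fun A hA hAm => ?_
  have hempty : escape ⁻¹' A = ∅ := eq_empty_of_forall_notMem fun x hx =>
    (mem_Wbd.1 (hA hx)).ne' (lifetime_escape x)
  simp [Measure.map_apply measurable_escape hAm, hempty]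

lemma comap_fst_diagonalPlan : (diagonalPlan s ρ₁ ρ₂).fst.comap (↑) = s.fst + ρ₁ := by
  have hval := measurableEmbedding_val_Wbd
  have hfst : (diagonalPlan s ρ₁ ρ₂).fst = s.fst.map (↑) + ρ₁.map (↑) + ρ₂.map escape := by
    simp only [diagonalPlan, Measure.fst, Measure.map_add _ _ measurable_fst,
      Measure.map_map measurable_fst measurable_prodMap_val,
      Measure.map_map measurable_fst measurable_val_prodMk_escape,
      Measure.map_map measurable_fst measurable_escape_prodMk_val,
      Measure.map_map hval.measurable measurable_fst]
    rfl
  rw [hfst, hval.comap_add, hval.comap_add, hval.comap_map, hval.comap_map, comap_map_escape,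
    add_zero]

lemma comap_snd_diagonalPlan : (diagonalPlan s ρ₁ ρ₂).snd.comap (↑) = s.snd + ρ₂ := by
  have hval := measurableEmbedding_val_Wbd
  have hsnd : (diagonalPlan s ρ₁ ρ₂).snd = s.snd.map (↑) + ρ₁.map escape + ρ₂.map (↑) := by
    simp only [diagonalPlan, Measure.snd, Measure.map_add _ _ measurable_snd,
      Measure.map_map measurable_snd measurable_prodMap_val,
      Measure.map_map measurable_snd measurable_val_prodMk_escape,
      Measure.map_map measurable_snd measurable_escape_prodMk_val,
      Measure.map_map hval.measurable measurable_snd]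
    rfl
  rw [hsnd, hval.comap_add, hval.comap_add, hval.comap_map, hval.comap_map, comap_map_escape,
    add_zero]

lemma isFiniteMeasureOnCompacts_diagonalPlan [IsFiniteMeasure s] (hρ₁ : OffDiagFinite ρ₁)
    (hρ₂ : OffDiagFinite ρ₂) : IsFiniteMeasureOnCompacts (diagonalPlan s ρ₁ ρ₂) where
  lt_top_of_isCompact K hK := by
    have hK₁ : ρ₁ {x : Wbd | ((x : P2), escape x) ∈ K} < ∞ :=
      measure_lt_top_mono (fun _ hx => mem_image_of_mem Prod.snd hx)
        (hρ₁.measure_preimage_escape_lt_top (hK.image continuous_snd))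
    have hK₂ : ρ₂ {y : Wbd | (escape y, (y : P2)) ∈ K} < ∞ :=
      measure_lt_top_mono (fun _ hy => mem_image_of_mem Prod.fst hy)
        (hρ₂.measure_preimage_escape_lt_top (hK.image continuous_fst))
    rw [diagonalPlan, Measure.add_apply, Measure.add_apply,
      Measure.map_apply measurable_prodMap_val hK.measurableSet,
      Measure.map_apply measurable_val_prodMk_escape hK.measurableSet,
      Measure.map_apply measurable_escape_prodMk_val hK.measurableSet]
    exact ENNReal.add_lt_top.2 ⟨ENNReal.add_lt_top.2 ⟨measure_lt_top _ _, hK₁⟩, hK₂⟩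

lemma isCoupling_diagonalPlan [IsFiniteMeasure s] (hρ₁ : OffDiagFinite ρ₁)
    (hρ₂ : OffDiagFinite ρ₂) :
    IsCoupling (diagonalPlan s ρ₁ ρ₂) ((s.fst + ρ₁).map (↑)) ((s.snd + ρ₂).map (↑)) := by
  refine isCoupling_map_val_iff.2 ⟨?_, comap_fst_diagonalPlan, comap_snd_diagonalPlan⟩
  have := isFiniteMeasureOnCompacts_diagonalPlan (s := s) hρ₁ hρ₂
  have hclosed : IsClosed (Wcl ×ˢ Wcl) := isClosed_closure.prod isClosed_closure
  have hval (x : Wbd) : (x : P2) ∈ Wcl := subset_closure x.2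
  have hescape (x : Wbd) : escape x ∈ Wcl := mem_Wcl.2 (lifetime_escape x).ge
  refine .of_isClosed hclosed _ (mem_ae_iff.1 ((ae_diagonalPlan_iff hclosed.measurableSet).2 ?_))
  exact ⟨⟨.of_forall fun z => ⟨hval z.1, hval z.2⟩, .of_forall fun x => ⟨hval x, hescape x⟩⟩,
    .of_forall fun y => ⟨hescape y, hval y⟩⟩

lemma costInf_diagonalPlan_le {δ : ℝ} (hδ : 0 ≤ δ) (hs : ∀ᵐ z ∂s, dist z.1 z.2 ≤ δ)
    (hρ₁ : ∀ᵐ x ∂ρ₁, x ∉ farDiag (2 * δ)) (hρ₂ : ∀ᵐ y ∂ρ₂, y ∉ farDiag (2 * δ)) :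
    costInf (diagonalPlan s ρ₁ ρ₂) ≤ ENNReal.ofReal δ := by
  refine (costInf_le_ofReal_iff hδ).2 ((ae_diagonalPlan_iff
    (isClosed_le continuous_dW continuous_const).measurableSet).2 ⟨⟨?_, ?_⟩, ?_⟩)
  · exact hs.mono fun z hz => (min_le_left _ _).trans hz
  · exact hρ₁.mono fun x hx => dW_escape_le hx
  · exact hρ₂.mono fun y hy => (dW_comm _ _).trans_le (dW_escape_le hy)

theorem IsPartialMatching.OT_le {δ : ℝ} {σ : Measure (Wbd × Wbd)} {μ ν : Measure Wbd}
    (h : IsPartialMatching δ σ μ ν) (hδ : 0 < δ) (hμ : OffDiagFinite μ) (hν : OffDiagFinite ν) :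
    OT (μ.map (↑)) (ν.map (↑)) ≤ ENNReal.ofReal δ := by
  have hfar := measurableSet_farDiag (2 * δ)
  have hs := h.restrict hfar hfar
  set s := σ.restrict (Prod.fst ⁻¹' farDiag (2 * δ) ∪ Prod.snd ⁻¹' farDiag (2 * δ))
  have : IsFiniteMeasure s := isFiniteMeasure_restrict.2
    (h.measure_union_lt_top hfar hfar (hμ _ (by positivity)) (hν _ (by positivity))).ne
  obtain ⟨ρ₁, rfl, hρ₁⟩ := exists_add_eq_of_restrict_le hfar hs.fst_le hs.restrict_le_fst
  obtain ⟨ρ₂, rfl, hρ₂⟩ := exists_add_eq_of_restrict_le hfar hs.snd_le hs.restrict_le_snd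
  exact iInf₂_le_of_le _
    (isCoupling_diagonalPlan (hμ.mono (Measure.le_add_left le_rfl))
      (hν.mono (Measure.le_add_left le_rfl)))
    (costInf_diagonalPlan_le hδ.le hs.ae_mem hρ₁ hρ₂)

end DiagonalPlan

section Truncation

variable {μ : Measure P2} {ε : ℝ}

lemma restrict_Weps_map_val (m : Measure Wbd) (ε : ℝ) :
    (m.map (↑)).restrict (Weps ε) = (m.restrict (farDiag ε)).map (↑) := by
  rw [measurableEmbedding_val_Wbd.restrict_map, preimage_val_Weps]

lemma restrict_Weps_mem_Mfin (hμ : μ ∈ Mf) (hε : 0 < ε) : μ.restrict (Weps ε) ∈ Mfin := by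
  obtain ⟨m, rfl, hm, R, hR⟩ := exists_map_val_eq_of_mem_Mf hμ
  have hle : m.restrict (farDiag ε) ≤ m := Measure.restrict_le_self
  rw [restrict_Weps_map_val]
  refine ⟨(map_val_mem_Mf_iff.2 ⟨hm.mono hle, R, le_bot_iff.1 ((hle _).trans hR.le)⟩).1, ?_⟩
  rw [measurableEmbedding_val_Wbd.map_apply, Subtype.coe_preimage_self,
    Measure.restrict_apply_univ]
  exact hm ε hε

lemma OT_restrict_Weps_le (hμ : μ ∈ Mf) (hε : 0 < ε) :
    OT μ (μ.restrict (Weps ε)) ≤ ENNReal.ofReal ε := by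
  obtain ⟨m, rfl, hm, -⟩ := exists_map_val_eq_of_mem_Mf hμ
  have hmatch : IsPartialMatching ε _ m (m.restrict (farDiag ε)) :=
    isPartialCoupling_map_diag_restrict m (farDiag_anti (by linarith))
      (isClosed_dist_le ε).measurableSet fun x => (dist_self x).trans_le hε.le
  rw [restrict_Weps_map_val]
  exact hmatch.OT_le hε hm (hm.mono Measure.restrict_le_self)

lemma Mfin_subset_Mf : Mfin ⊆ Mf := fun _ hμ =>
  ⟨hμ.1, fun _ hε => measure_lt_top_mono (fun _ hp => mem_Wbd.2 (hε.trans hp)) hμ.2⟩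

end Truncation

section Completeness

variable {ι : Type*} {vs : ι → Measure Wbd} {m ν : Measure Wbd} {δ : ℝ}

lemma limsup_measure_farDiag_le {l : Filter ι}
    (h : ∀ᶠ i in l, ∃ σ, IsPartialMatching δ σ (vs i) ν) {a : ℝ} (ha : 0 ≤ a) :
    limsup (fun i => vs i (farDiag (a + 2 * δ))) l ≤ ν (farDiag a) :=
  limsup_le_of_le (h := h.mono fun _ ⟨_, hσ⟩ => hσ.measure_farDiag_le ha)

lemma VagueTendsto.measure_farDiag_le {l : Filter ι} [l.NeBot] [m.Regular]
    (hm : VagueTendsto vs l m) (h : ∀ᶠ i in l, ∃ σ, IsPartialMatching δ σ (vs i) ν) {a : ℝ}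
    (ha : 0 ≤ a) : m (farDiag (a + 2 * δ)) ≤ ν (farDiag a) :=
  calc m (farDiag (a + 2 * δ)) ≤ liminf (fun i => vs i (farDiag (a + 2 * δ))) l :=
        hm.measure_le_liminf_of_isOpen (isOpen_farDiag _)
    _ ≤ limsup (fun i => vs i (farDiag (a + 2 * δ))) l := liminf_le_limsup
    _ ≤ ν (farDiag a) := limsup_measure_farDiag_le h ha

theorem exists_vagueTendsto_of_isPartialMatching {l : Ultrafilter ι}
    (hvs : ∀ i, OffDiagFinite (vs i)) (hR : ∀ i, ∃ R, vs i (farDiag R) = 0)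
    (h : ∀ δ > 0, ∃ j, ∀ᶠ i in l, ∃ σ, IsPartialMatching δ σ (vs i) (vs j)) :
    ∃ m : Measure Wbd, m.Regular ∧ VagueTendsto vs l m ∧ OffDiagFinite m ∧
      ∃ R, m (farDiag R) = 0 := by
  have (i : ι) : IsFiniteMeasureOnCompacts (vs i) := (hvs i).isFiniteMeasureOnCompacts
  have half_add (ε : ℝ) : ε / 2 + 2 * (ε / 4) = ε := by ring
  obtain ⟨m, hmreg, hm⟩ := exists_regular_vagueTendsto l vs fun K hK => by
    obtain ⟨ε, hε, hKε⟩ := exists_subset_farDiag hK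
    obtain ⟨j, hj⟩ := h (ε / 4) (by positivity)
    calc limsup (fun i => vs i K) l ≤ limsup (fun i => vs i (farDiag ε)) l :=
          limsup_le_limsup (.of_forall fun i => measure_mono hKε)
      _ ≤ vs j (farDiag (ε / 2)) := by
          simpa only [half_add] using limsup_measure_farDiag_le hj (half_pos hε).le
      _ < ∞ := hvs j _ (half_pos hε)
  refine ⟨m, hmreg, hm, fun ε hε => ?_, ?_⟩
  · obtain ⟨j, hj⟩ := h (ε / 4) (by positivity)
    rw [← half_add ε]
    exact (hm.measure_farDiag_le hj (half_pos hε).le).trans_lt (hvs j _ (half_pos hε))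
  · obtain ⟨j, hj⟩ := h 1 one_pos
    obtain ⟨R, hjR⟩ := hR j
    have hjR' : vs j (farDiag |R|) = 0 := measure_mono_null (farDiag_anti (le_abs_self R)) hjR
    exact ⟨_, le_bot_iff.1 ((hm.measure_farDiag_le hj (abs_nonneg R)).trans hjR'.le)⟩

lemma OT_le_of_vagueTendsto {l : Ultrafilter ι} [m.Regular] (hδ : 0 < δ)
    (hvs : ∀ i, OffDiagFinite (vs i)) (hν : OffDiagFinite ν) (hm : OffDiagFinite m)
    (hlim : VagueTendsto vs l m) (h : ∀ᶠ i in l, ∃ σ, IsPartialMatching δ σ ν (vs i)) :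
    OT (ν.map (↑)) (m.map (↑)) ≤ ENNReal.ofReal δ := by
  have (i : ι) : IsFiniteMeasureOnCompacts (vs i) := (hvs i).isFiniteMeasureOnCompacts
  have := hν.isFiniteMeasureOnCompacts
  have hconst : VagueTendsto (fun _ => ν) (l : Filter ι) ν := fun _ => tendsto_const_nhds
  obtain ⟨σ, hσ⟩ := exists_isPartialMatching_of_vagueTendsto hδ.le hconst hlim h
  exact hσ.OT_le hδ hν hm

theorem exists_tendsto_OT_zero {u : ℕ → Measure P2} (hu : ∀ n, u n ∈ Mf)
    (hcauchy : ∀ ε : ℝ, 0 < ε → ∃ N : ℕ, ∀ m ≥ N, ∀ n ≥ N, OT (u m) (u n) < ENNReal.ofReal ε) :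
    ∃ μ ∈ Mf, Tendsto (fun n => OT (u n) μ) atTop (𝓝 0) := by
  choose v hv hfin hR using fun n => exists_map_val_eq_of_mem_Mf (hu n)
  obtain rfl : (fun n => (v n).map (↑)) = u := funext hv
  let l : Ultrafilter ℕ := Ultrafilter.of atTop
  have hmatch (δ : ℝ) (hδ : 0 < δ) : ∃ N, ∀ k ≥ N, ∀ᶠ n in l,
      ∃ σ, IsPartialMatching δ σ (v k) (v n) := by
    obtain ⟨N, hN⟩ := hcauchy δ hδ
    exact ⟨N, fun k hk => Ultrafilter.of_le atTop <| (eventually_ge_atTop N).mono fun n hn =>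
      exists_isPartialMatching_of_OT_lt (hN k hk n hn)⟩
  obtain ⟨m, hmreg, hlim, hmfin, hmR⟩ := exists_vagueTendsto_of_isPartialMatching hfin hR
    fun δ hδ => (hmatch δ hδ).imp fun N hN => (hN N le_rfl).mono fun _ ⟨_, hσ⟩ => ⟨_, hσ.symm⟩
  refine ⟨m.map (↑), map_val_mem_Mf_iff.2 ⟨hmfin, hmR⟩, ENNReal.tendsto_atTop_zero.2 ?_⟩
  intro ε hε
  obtain ⟨δ, -, hδ, hδε⟩ := ENNReal.lt_iff_exists_real_btwn.1 hε
  replace hδ : 0 < δ := ENNReal.ofReal_pos.1 hδ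
  obtain ⟨N, hN⟩ := hmatch δ hδ
  exact ⟨N, fun k hk =>
    (OT_le_of_vagueTendsto hδ hfin (hfin k) hmfin hlim (hN k hk)).trans hδε.le⟩

end Completeness

/-- For `μ ∈ M_f^∞` and `ε > 0`, the finite measure
`μ_ε(E) = μ(E ∩ W_ε)` satisfies `OT_∞(μ, μ_ε) ≤ ε`. Consequently `M_fin^∞` is dense in
`(M_f^∞, OT_∞)`, and `M_f^∞` is the Cauchy completion of `(M_fin^∞, OT_∞)`:
`M_fin^∞ ⊆ M_f^∞` is dense and `M_f^∞` is complete. -/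
theorem Mf_completion_of_Mfin :
    (∀ μ ∈ Mf, ∀ ε : ℝ, 0 < ε →
      μ.restrict (Weps ε) ∈ Mfin ∧ OT μ (μ.restrict (Weps ε)) ≤ ENNReal.ofReal ε) ∧
    (∀ μ ∈ Mf, ∀ ε : ℝ, 0 < ε → ∃ ν ∈ Mfin, OT μ ν < ENNReal.ofReal ε) ∧
    Mfin ⊆ Mf ∧
    (∀ u : ℕ → Measure P2, (∀ n, u n ∈ Mf) →
      (∀ ε : ℝ, 0 < ε → ∃ N : ℕ, ∀ m ≥ N, ∀ n ≥ N, OT (u m) (u n) < ENNReal.ofReal ε) →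
      ∃ μ ∈ Mf, Tendsto (fun n => OT (u n) μ) atTop (𝓝 0)) := by
  refine ⟨fun μ hμ ε hε => ⟨restrict_Weps_mem_Mfin hμ hε, OT_restrict_Weps_le hμ hε⟩,
    fun μ hμ ε hε => ⟨μ.restrict (Weps (ε / 2)), restrict_Weps_mem_Mfin hμ (half_pos hε), ?_⟩,
    Mfin_subset_Mf, fun u hu hcauchy => exists_tendsto_OT_zero hu hcauchy⟩
  calc OT μ (μ.restrict (Weps (ε / 2))) ≤ ENNReal.ofReal (ε / 2) :=
        OT_restrict_Weps_le hμ (half_pos hε)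
    _ < ENNReal.ofReal ε := (ENNReal.ofReal_lt_ofReal_iff hε).2 (half_lt_self hε)
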